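/- Let κ* = c/(cγ + λ̄γ² + √(λ̄cγ³ + λ̄²γ⁴)) and θ* = (c/(λ̄γ))·(1 − κ*γ) − κ*γ. Then 0 < κ*γ < 1, θ* > −1, and (κ*, θ*) is a saddle point of F_J, i.e. F_J(κ, θ*) ≤ F_J(κ*, θ*) ≤ F_J(κ*, θ) for all κ with κγ < 1 and all θ > −1; in particular sup over κ of inf over θ of F_J is attained at (κ*, θ*). -/

import Mathlib

/-!
In the coordinates `u = 1 - κγ` and `t = 1 + θ`, completing the relative entropy gives
`F_J = (c + λ̄γ)κ + λ̄(1 - 1/u) + (λ̄/u) · klFun (tu)`, so for fixed `κ` the minimum over `θ` is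
at `tu = 1`. For fixed `θ` the objective is concave in `κ`, and stationarity reads
`(c + λ̄γ)u = λ̄γt`. Together these give `u² = λ̄γ/(c + λ̄γ)`, and rationalizing
`κ = (1 - u)/γ` produces the stated formula for `κ*`.
-/

open InformationTheory Real Set

section MinimaxValue

variable {α β δ : Type*} [ConditionallyCompleteLinearOrder δ]

theorem iSup_iInf_eq_of_isMaxOn_of_isMinOn {f : α → β → δ} {s : Set α} {t : Set β} {a : α} {b : β}
    (ha : a ∈ s) (hb : b ∈ t) (hmax : IsMaxOn (f · b) s a) (hmin : IsMinOn (f a) t b)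
    (hbdd : ∀ x ∈ s, BddBelow (range fun y : t ↦ f x y)) :
    ⨆ x : s, ⨅ y : t, f x y = f a b := by
  have hvalue : ⨅ y : t, f a y = f a b := hmin.iInf_eq hb
  have hmaximin : IsMaxOn (fun x ↦ ⨅ y : t, f x y) s a := fun x hx ↦
    calc ⨅ y : t, f x y ≤ f x b := ciInf_le (hbdd x hx) ⟨b, hb⟩
      _ ≤ f a b := hmax hx
      _ = ⨅ y : t, f a y := hvalue.symm
  exact (hmaximin.iSup_eq ha).trans hvalue

end MinimaxValue

/-- The integrand `F_J(κ, θ)` of the robust logarithmic utility with Poisson jumps of size `γ` and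
intensity `lamb`. It has its intended meaning only where `κγ < 1` and `θ > -1`, since `Real.log`
takes junk values on nonpositive arguments. -/
noncomputable def jumpObjective (c lamb γ κ θ : ℝ) : ℝ :=
  c * κ + lamb * κ * γ + lamb * (1 + θ) * log (1 - κ * γ)
    + lamb * ((1 + θ) * log (1 + θ) - θ)

/-- The worst case over `θ` of `jumpObjective`, in closed form. -/
noncomputable def worstCaseObjective (c lamb γ κ : ℝ) : ℝ :=
  (c + lamb * γ) * κ + lamb * (1 - (1 - κ * γ)⁻¹)

/-- The liability ratio `κ*` of the saddle point. -/
noncomputable def saddleLiabilityRatio (c lamb γ : ℝ) : ℝ :=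
  c / (c * γ + lamb * γ ^ 2 + √(lamb * c * γ ^ 3 + lamb ^ 2 * γ ^ 4))

/-- The intensity distortion `θ` for which the liability ratio `κ` is a stationary point of
`jumpObjective`; at `κ = κ*` it is the `θ*` of the saddle point. -/
noncomputable def stationaryDistortion (c lamb γ κ : ℝ) : ℝ :=
  c / (lamb * γ) * (1 - κ * γ) - κ * γ

section JumpObjective

variable {c lamb γ κ θ : ℝ}

theorem jumpObjective_eq_worstCaseObjective_add_klFun (hκ : κ * γ < 1) (hθ : -1 < θ) :
    jumpObjective c lamb γ κ θ =
      worstCaseObjective c lamb γ κ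
        + lamb * (klFun ((1 + θ) * (1 - κ * γ)) / (1 - κ * γ)) := by
  have hu : 1 - κ * γ ≠ 0 := by linarith
  have ht : 1 + θ ≠ 0 := by linarith
  rw [jumpObjective, worstCaseObjective, klFun_apply, log_mul ht hu]
  field_simp
  ring

theorem worstCaseObjective_le_jumpObjective (hlamb : 0 ≤ lamb) (hκ : κ * γ < 1) (hθ : -1 < θ) :
    worstCaseObjective c lamb γ κ ≤ jumpObjective c lamb γ κ θ := by
  have hu : 0 < 1 - κ * γ := by linarith
  have ht : 0 < 1 + θ := by linarith
  have hkl : 0 ≤ klFun ((1 + θ) * (1 - κ * γ)) := klFun_nonneg (mul_nonneg ht.le hu.le)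
  rw [jumpObjective_eq_worstCaseObjective_add_klFun hκ hθ]
  exact le_add_of_nonneg_right (mul_nonneg hlamb (div_nonneg hkl hu.le))

theorem bddBelow_range_jumpObjective (hlamb : 0 ≤ lamb) (hκ : κ * γ < 1) :
    BddBelow (range fun θ : Ioi (-1 : ℝ) ↦ jumpObjective c lamb γ κ θ) :=
  ⟨worstCaseObjective c lamb γ κ,
    forall_mem_range.2 fun θ ↦ worstCaseObjective_le_jumpObjective hlamb hκ θ.2⟩

theorem neg_one_lt_of_one_add_mul_eq_one (hκ : κ * γ < 1) (hstat : (1 + θ) * (1 - κ * γ) = 1) :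
    -1 < θ := by
  have ht : 0 < 1 + θ := pos_of_mul_pos_left (one_pos.trans_eq hstat.symm) (sub_pos.2 hκ).le
  linarith

theorem isMinOn_jumpObjective (hlamb : 0 ≤ lamb) (hκ : κ * γ < 1)
    (hstat : (1 + θ) * (1 - κ * γ) = 1) :
    IsMinOn (jumpObjective c lamb γ κ) (Ioi (-1)) θ := by
  have hvalue : jumpObjective c lamb γ κ θ = worstCaseObjective c lamb γ κ := by
    simp [jumpObjective_eq_worstCaseObjective_add_klFun hκ
      (neg_one_lt_of_one_add_mul_eq_one hκ hstat), hstat, klFun_one]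
  intro θ' hθ'
  exact hvalue.trans_le (worstCaseObjective_le_jumpObjective hlamb hκ hθ')

theorem isMaxOn_jumpObjective (hlamb : 0 ≤ lamb) (hκ : κ * γ < 1) (hθ : -1 ≤ θ)
    (hstat : (c + lamb * γ) * (1 - κ * γ) = lamb * γ * (1 + θ)) :
    IsMaxOn (jumpObjective c lamb γ · θ) {κ | κ * γ < 1} κ := by
  intro κ' (hκ' : κ' * γ < 1)
  have hu : 0 < 1 - κ * γ := by linarith
  have hu' : 0 < 1 - κ' * γ := by linarith
  have htangent : log (1 - κ' * γ) - log (1 - κ * γ) ≤ (1 - κ' * γ) / (1 - κ * γ) - 1 := by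
    rw [← log_div hu'.ne' hu.ne']
    exact log_le_sub_one_of_pos (div_pos hu' hu)
  have hslope : lamb * (1 + θ) * ((1 - κ' * γ) / (1 - κ * γ) - 1) =
      (c + lamb * γ) * (κ - κ') := by
    rw [div_sub_one hu.ne', mul_div_assoc', div_eq_iff hu.ne']
    linear_combination (κ' - κ) * hstat
  have hweighted := mul_le_mul_of_nonneg_left htangent
    (mul_nonneg hlamb (by linarith : 0 ≤ 1 + θ))
  change jumpObjective c lamb γ κ' θ ≤ jumpObjective c lamb γ κ θ
  rw [jumpObjective, jumpObjective]
  linarith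

end JumpObjective

section SaddlePoint

variable {c lamb γ : ℝ}

theorem one_sub_saddleLiabilityRatio_mul (hlamb : 0 ≤ lamb) (hγ : 0 < γ)
    (hA : 0 < c + lamb * γ) :
    1 - saddleLiabilityRatio c lamb γ * γ = √(lamb * γ / (c + lamb * γ)) := by
  have hB : 0 ≤ lamb * γ := by positivity
  have hsqrt : √(lamb * c * γ ^ 3 + lamb ^ 2 * γ ^ 4) =
      γ * (√(lamb * γ) * √(c + lamb * γ)) := by
    have hfactor : lamb * c * γ ^ 3 + lamb ^ 2 * γ ^ 4 =
        γ ^ 2 * (lamb * γ * (c + lamb * γ)) := by ring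
    rw [hfactor, sqrt_mul (sq_nonneg γ), sqrt_sq hγ.le, sqrt_mul hB]
  have hdenom : c * γ + lamb * γ ^ 2 + √(lamb * c * γ ^ 3 + lamb ^ 2 * γ ^ 4) =
      γ * √(c + lamb * γ) * (√(c + lamb * γ) + √(lamb * γ)) := by
    rw [hsqrt]
    linear_combination -γ * sq_sqrt hA.le
  have hnum : c = (√(c + lamb * γ) - √(lamb * γ)) * (√(c + lamb * γ) + √(lamb * γ)) := by
    linear_combination sq_sqrt hB - sq_sqrt hA.le
  have hratio : saddleLiabilityRatio c lamb γ =
      (√(c + lamb * γ) - √(lamb * γ)) / (γ * √(c + lamb * γ)) := by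
    rw [saddleLiabilityRatio, hdenom, div_eq_div_iff (by positivity) (by positivity)]
    linear_combination γ * √(c + lamb * γ) * hnum
  rw [hratio, sqrt_div hB]
  field_simp
  ring

theorem saddleLiabilityRatio_mul_pos (hc : 0 < c) (hlamb : 0 ≤ lamb) (hγ : 0 < γ) :
    0 < saddleLiabilityRatio c lamb γ * γ := by
  unfold saddleLiabilityRatio
  positivity

theorem saddleLiabilityRatio_mul_lt_one (hlamb : 0 < lamb) (hγ : 0 < γ)
    (hA : 0 < c + lamb * γ) :
    saddleLiabilityRatio c lamb γ * γ < 1 := by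
  rw [← sub_pos, one_sub_saddleLiabilityRatio_mul hlamb.le hγ hA]
  positivity

theorem mul_one_sub_eq_mul_one_add_stationaryDistortion (hlamb : lamb ≠ 0) (hγ : γ ≠ 0) (κ : ℝ) :
    (c + lamb * γ) * (1 - κ * γ) = lamb * γ * (1 + stationaryDistortion c lamb γ κ) := by
  rw [stationaryDistortion]
  field_simp
  ring

theorem one_add_stationaryDistortion_saddleLiabilityRatio_mul (hlamb : 0 < lamb) (hγ : 0 < γ)
    (hA : 0 < c + lamb * γ) :
    (1 + stationaryDistortion c lamb γ (saddleLiabilityRatio c lamb γ))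
      * (1 - saddleLiabilityRatio c lamb γ * γ) = 1 := by
  set κs := saddleLiabilityRatio c lamb γ with hκs
  have hsq : (c + lamb * γ) * (1 - κs * γ) ^ 2 = lamb * γ := by
    rw [hκs, one_sub_saddleLiabilityRatio_mul hlamb.le hγ hA, sq_sqrt (by positivity),
      mul_div_cancel₀ _ hA.ne']
  apply mul_left_cancel₀ (mul_pos hlamb hγ).ne'
  linear_combination hsq -
    (1 - κs * γ) * mul_one_sub_eq_mul_one_add_stationaryDistortion (c := c) hlamb.ne' hγ.ne' κs

end SaddlePoint

/-- **Saddle point of the robust objective with Poisson jumps.**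
With `κ* = c/(cγ + λ̄γ² + √(λ̄cγ³ + λ̄²γ⁴))` and `θ* = (c/(λ̄γ))(1 − κ*γ) − κ*γ`,
one has `0 < κ*γ < 1`, `θ* > −1`, and `(κ*, θ*)` is a saddle point of `F_J` on
`{κγ < 1} × {θ > −1}`; in particular `sup_κ inf_θ F_J` is attained at `(κ*, θ*)`. -/
theorem jump_robust_saddle_point
    (c lamb γ : ℝ) (hc : 0 < c) (hlamb : 0 < lamb) (hγ : 0 < γ)
    (FJ : ℝ → ℝ → ℝ)
    (hFJ : ∀ κ θ : ℝ, κ*γ < 1 → -1 < θ →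
      FJ κ θ = c*κ + lamb*κ*γ + lamb*(1 + θ)*Real.log (1 - κ*γ)
        + lamb*((1 + θ)*Real.log (1 + θ) - θ))
    (κs θs : ℝ)
    (hκs : κs = c / (c*γ + lamb*γ^2 + Real.sqrt (lamb*c*γ^3 + lamb^2*γ^4)))
    (hθs : θs = (c/(lamb*γ))*(1 - κs*γ) - κs*γ) :
    0 < κs*γ ∧ κs*γ < 1 ∧ -1 < θs ∧
    (∀ κ : ℝ, κ*γ < 1 → FJ κ θs ≤ FJ κs θs) ∧
    (∀ θ : ℝ, -1 < θ → FJ κs θs ≤ FJ κs θ) ∧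
    (⨆ κ : {x : ℝ // x*γ < 1}, ⨅ θ : {x : ℝ // (-1:ℝ) < x}, FJ κ.1 θ.1)
      = FJ κs θs := by
  have hA : 0 < c + lamb * γ := by positivity
  change κs = saddleLiabilityRatio c lamb γ at hκs
  change θs = stationaryDistortion c lamb γ κs at hθs
  subst hθs hκs
  have hκ := saddleLiabilityRatio_mul_lt_one hlamb hγ hA
  have hstat := one_add_stationaryDistortion_saddleLiabilityRatio_mul hlamb hγ hA
  have hθ := neg_one_lt_of_one_add_mul_eq_one hκ hstat
  have hmax := isMaxOn_jumpObjective hlamb.le hκ hθ.le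
    (mul_one_sub_eq_mul_one_add_stationaryDistortion hlamb.ne' hγ.ne' _)
  have hmin := isMinOn_jumpObjective (c := c) hlamb.le hκ hstat
  have hvalue := iSup_iInf_eq_of_isMaxOn_of_isMinOn (s := {κ | κ * γ < 1}) hκ hθ hmax hmin
    fun _ ↦ bddBelow_range_jumpObjective hlamb.le
  replace hFJ : ∀ κ θ, κ * γ < 1 → -1 < θ → FJ κ θ = jumpObjective c lamb γ κ θ := hFJ
  refine ⟨saddleLiabilityRatio_mul_pos hc hlamb.le hγ, hκ, hθ, fun κ hκ' ↦ ?_, fun θ hθ' ↦ ?_, ?_⟩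
  · rw [hFJ _ _ hκ' hθ, hFJ _ _ hκ hθ]
    exact hmax hκ'
  · rw [hFJ _ _ hκ hθ, hFJ _ _ hκ hθ']
    exact hmin hθ'
  · rw [hFJ _ _ hκ hθ, ← hvalue]
    exact iSup_congr fun κ ↦ iInf_congr fun θ ↦ hFJ _ _ κ.2 θ.2
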